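/- arXiv:2206.10688 — 4 statements merged into one kernel-verified Lean document; each statement's English description precedes it below -/
import Mathlib

section
/- Let a, b ∈ ℂ \ {0} and γ ∈ ℂ with Re(γ) > −1, and let φ : ℝ → ℂ be a Schwartz function. Then the function x ↦ (D_{a,b}^γ φ)(x) = (1/(2π)) ∫_ℝ φ̂(ω) h_{a,b}^γ(ω) e^{iωx} dω is infinitely differentiable on ℝ. -/
/-! Up to the factor `1/(2π)` and a rescaling of the variable by `-1/(2π)`, `Dop a b γ φ` is the
Fourier transform of `F ω = FT φ ω * hab a b γ ω`, so it suffices that every moment `∫ |ω|^n ‖F ω‖` is finite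
(`integrable_moment`). Since `‖hab a b γ ω‖` is at most a constant times `|ω| ^ re γ`
(`norm_hab_le`), there are two regimes. Near the origin, `FT φ` is bounded and `|ω| ^ re γ` is
integrable because `re γ > -1`. Away from the origin, `|ω| ^ re γ ≤ |ω| ^ m` for an integer
`m ≥ re γ`, and `|ω|^(n+m) ‖FT φ ω‖` is integrable because `FT φ` is again a Schwartz function
(`exists_schwartz_eq_FT`). -/

open MeasureTheory Complex

/-- The homogeneous Fourier multiplier `h_{a,b}^γ`. -/
noncomputable def hab (a b γ : ℂ) (ω : ℝ) : ℂ :=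
  if 0 < ω then a * (ω : ℂ) ^ γ
  else if ω < 0 then b * ((-ω : ℝ) : ℂ) ^ γ
  else 0

/-- The Fourier transform `φ̂(ω) = ∫ φ(x) e^{-iωx} dx`. -/
noncomputable def FT (φ : ℝ → ℂ) (ω : ℝ) : ℂ :=
  ∫ x : ℝ, φ x * Complex.exp (-(Complex.I * (ω : ℂ) * (x : ℂ)))

/-- The complex-order derivative `D_{a,b}^γ`. -/
noncomputable def Dop (a b γ : ℂ) (φ : ℝ → ℂ) (x : ℝ) : ℂ :=
  (1 / (2 * (Real.pi : ℂ))) *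
    ∫ ω : ℝ, FT φ ω * hab a b γ ω * Complex.exp (Complex.I * (ω : ℂ) * (x : ℂ))

/-- The complex-order integration operator `I_{a,b}^{γ;k}`. -/
noncomputable def Iop (a b γ : ℂ) (k : ℕ) (φ : ℝ → ℂ) (x : ℝ) : ℂ :=
  (1 / (2 * (Real.pi : ℂ))) *
    ∫ ω : ℝ, FT φ ω *
      ((Complex.exp (Complex.I * (ω : ℂ) * (x : ℂ)) -
        ∑ j ∈ Finset.range k, (Complex.I * (x : ℂ)) ^ j * (ω : ℂ) ^ j / (j.factorial : ℂ)) /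
        hab a b γ ω)

/-- The adjoint integration operator `I_{a,b}^{(γ;k)*}`. -/
noncomputable def Istar (a b γ : ℂ) (k : ℕ) (φ : ℝ → ℂ) (x : ℝ) : ℂ :=
  (1 / (2 * (Real.pi : ℂ))) *
    ∫ ω : ℝ,
      (FT φ ω - ∑ j ∈ Finset.range k, iteratedDeriv j (FT φ) 0 * (ω : ℂ) ^ j / (j.factorial : ℂ)) /
        hab a b γ (-ω) * Complex.exp (Complex.I * (ω : ℂ) * (x : ℂ))

lemma norm_hab_le (a b γ : ℂ) {ω : ℝ} (hω : ω ≠ 0) :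
    ‖hab a b γ ω‖ ≤ (‖a‖ + ‖b‖) * |ω| ^ γ.re := by
  have hp : 0 ≤ |ω| ^ γ.re := by positivity
  unfold hab
  rcases lt_or_gt_of_ne hω with h | h
  · rw [if_neg h.not_gt, if_pos h, norm_mul, norm_cpow_eq_rpow_re_of_pos (by linarith),
      abs_of_neg h]
    rw [abs_of_neg h] at hp
    nlinarith [norm_nonneg a, norm_nonneg b]
  · rw [if_pos h, norm_mul, norm_cpow_eq_rpow_re_of_pos h, abs_of_pos h]
    rw [abs_of_pos h] at hp
    nlinarith [norm_nonneg a, norm_nonneg b]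

lemma measurable_hab (a b γ : ℂ) : Measurable (hab a b γ) := by
  unfold hab
  refine Measurable.ite measurableSet_Ioi (by fun_prop)
    (Measurable.ite measurableSet_Iio (by fun_prop) measurable_const)

/-- `FT φ` is the unitary-frequency Fourier transform `𝓕 φ` rescaled by `1/(2π)`, hence
Schwartz. -/
lemma exists_schwartz_eq_FT (φ : SchwartzMap ℝ ℂ) :
    ∃ ψ : SchwartzMap ℝ ℂ, ∀ ω, ψ ω = FT φ ω := by
  have hc : (2 * Real.pi)⁻¹ ≠ 0 := by positivity
  refine ⟨SchwartzMap.compCLMOfContinuousLinearEquiv ℝ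
    (ContinuousLinearEquiv.unitsEquivAut ℝ (Units.mk0 _ hc)) (FourierTransform.fourier φ),
    fun ω => ?_⟩
  rw [SchwartzMap.compCLMOfContinuousLinearEquiv_apply, Function.comp_apply,
    SchwartzMap.fourier_coe, Real.fourier_real_eq_integral_exp_smul, FT]
  congr 1 with x
  rw [smul_eq_mul, mul_comm]
  congr 2
  have : (Real.pi : ℂ) ≠ 0 := by exact_mod_cast Real.pi_ne_zero
  simp
  field_simp

lemma integrable_moment (a b γ : ℂ) (hγ : -1 < γ.re) (ψ : SchwartzMap ℝ ℂ) (n : ℕ) :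
    Integrable (fun ω : ℝ => ‖ω‖ ^ n * ‖ψ ω * hab a b γ ω‖) := by
  obtain ⟨M, hM⟩ : ∃ M, ∀ ω, ‖ψ ω‖ ≤ M := by
    obtain ⟨M, -, hM⟩ := ψ.decay 0 0
    exact ⟨M, by simpa using hM⟩
  have hM0 : 0 ≤ M := (norm_nonneg _).trans (hM 0)
  set C := ‖a‖ + ‖b‖
  have hC0 : 0 ≤ C := by positivity
  set m := ⌈γ.re⌉₊
  have hloc : Integrable
      ((Set.Ioo (-1 : ℝ) 1).indicator fun ω : ℝ => |ω| ^ γ.re) := by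
    have h := (integrableOn_fun_norm_addHaar (volume : Measure ℝ) (f := fun y : ℝ => y ^ γ.re)
      (r := 1)).2 (by
        simpa using (intervalIntegral.integrableOn_Ioo_rpow_iff one_pos).2 hγ)
    rw [Real.ball_eq_Ioo] at h
    rw [integrable_indicator_iff measurableSet_Ioo]
    simpa using h
  have hfar := ψ.integrable_pow_mul volume (n + m)
  refine ((hloc.const_mul (M * C)).add (hfar.const_mul C)).mono' ?_ ?_
  · exact ((measurable_norm.pow_const n).mul
      (ψ.continuous.measurable.mul (measurable_hab a b γ)).norm).aestronglyMeasurable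
  -- The origin is discarded: there the bound of `norm_hab_le` is not available.
  · filter_upwards [compl_mem_ae_iff.2 (measure_singleton (0 : ℝ))] with ω hω
    have hω0 : ω ≠ 0 := hω
    have hh := norm_hab_le a b γ hω0
    have hpos : 0 < |ω| := abs_pos.2 hω0
    rw [Real.norm_of_nonneg (by positivity), norm_mul, Pi.add_apply, Real.norm_eq_abs]
    have hr : 0 ≤ |ω| ^ γ.re := by positivity
    by_cases h1 : |ω| < 1
    · rw [Set.indicator_of_mem (Set.mem_Ioo.2 (abs_lt.1 h1))]
      calc |ω| ^ n * (‖ψ ω‖ * ‖hab a b γ ω‖) ≤ 1 * (M * (C * |ω| ^ γ.re)) := by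
            gcongr
            · exact pow_le_one₀ hpos.le h1.le
            · exact hM ω
        _ = M * C * |ω| ^ γ.re := by ring
        _ ≤ _ := le_add_of_nonneg_right (by positivity)
    · rw [Set.indicator_of_notMem (fun h : ω ∈ Set.Ioo (-1 : ℝ) 1 => h1 (abs_lt.2 h)),
        mul_zero, zero_add]
      have hle : |ω| ^ γ.re ≤ |ω| ^ m := by
        rw [← Real.rpow_natCast]
        exact Real.rpow_le_rpow_of_exponent_le (not_lt.1 h1) (Nat.le_ceil _)
      calc |ω| ^ n * (‖ψ ω‖ * ‖hab a b γ ω‖) ≤ |ω| ^ n * (‖ψ ω‖ * (C * |ω| ^ m)) := by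
            gcongr
            exact hh.trans (by gcongr)
        _ = C * (|ω| ^ (n + m) * ‖ψ ω‖) := by ring

/-- For `a, b ∈ ℂ \ {0}`, `γ ∈ ℂ` with `Re γ > -1`, and Schwartz `φ`,
the function `x ↦ (D_{a,b}^γ φ)(x)` is infinitely differentiable on `ℝ`. -/
theorem statement0 (a b γ : ℂ) (ha : a ≠ 0) (hb : b ≠ 0) (hγ : -1 < γ.re)
    (φ : SchwartzMap ℝ ℂ) :
    ∀ n : ℕ, ContDiff ℝ n (Dop a b γ ⇑φ) := by
  intro n
  obtain ⟨ψ, hψ⟩ := exists_schwartz_eq_FT φ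
  have key : Dop a b γ ⇑φ = fun x => (1 / (2 * (Real.pi : ℂ))) *
      FourierTransform.fourier (fun ω => ψ ω * hab a b γ ω) (-(2 * Real.pi)⁻¹ * x) := by
    funext x
    rw [Real.fourier_real_eq_integral_exp_smul, Dop]
    congr 2 with ω
    rw [smul_eq_mul, mul_comm, hψ]
    congr 2
    have : (Real.pi : ℂ) ≠ 0 := by exact_mod_cast Real.pi_ne_zero
    push_cast
    field_simp
  have hF : ContDiff ℝ n (FourierTransform.fourier (fun ω => ψ ω * hab a b γ ω)) :=
    Real.contDiff_fourier (N := n) fun k _ => integrable_moment a b γ hγ ψ k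
  rw [key]
  exact contDiff_const.mul (hF.comp (contDiff_const.mul contDiff_id))
end

section
/- Let a, b ∈ ℂ \ {0} and γ ∈ ℂ with Re(γ) > −1 and Re(γ) not a nonnegative integer, and let φ : ℝ → ℂ be a Schwartz function. Then there exists a constant c > 0 (depending on a, b, γ, φ) such that |(D_{a,b}^γ φ)(x)| ≤ c / (1 + |x|^{Re(γ)+1}) for all x ∈ ℝ. -/
/-!
By substituting `ω ↦ -ω` on the negative half-line, `D_{a,b}^γ φ` becomes a combination of two
one-sided oscillatory integrals `∫_0^∞ f(ω) ω^γ e^{iωx} dω` with `f` a Schwartz function (`Dop_eq`),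
so it suffices to bound these by `C |x|^{-(Re γ + 1)}` for `|x| ≥ 1`; for `|x| ≤ 1` the trivial bound
by the integral of the absolute value is enough.

For `-1 < Re γ < 0` (`hl_decay_neg`), integrate by parts against the antiderivative
`E(ω) = (e^{iωx} - 1)/(ix)`, which satisfies `|E(ω)| ≤ |x|⁻¹ min(|x|ω, 2)`. There is no boundary
term. In the term with `f'` the bound `min(u, 2) ≤ 2 u^{-Re γ}` cancels `ω^{Re γ}` exactly, and the
term with `f` is controlled by `∫_0^∞ ω^{Re γ - 1} min(|x|ω, 2) dω`, which scales like `|x|^{-Re γ}`.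

For `Re γ > 0` (`hl_recurrence`), integrating by parts against `e^{iωx}/(ix)` gains a factor `1/x`
and leaves the integrals for `(f', γ)` and `(f, γ - 1)`. Since `Re γ` is not an integer, iterating
leads to the first case and never meets `Re γ = 0`; `hl_decay_aux` is this induction.
-/

open MeasureTheory Complex

/-! ### Schwartz functions times complex powers on the half-line -/

open Set Filter Topology Asymptotics in
lemma hl_integrable (f : SchwartzMap ℝ ℂ) {γ : ℂ} (hγ : -1 < γ.re) :
    IntegrableOn (fun ω : ℝ => f ω * (ω : ℂ) ^ γ) (Ioi 0) := by
  have h := mellinConvergent_of_isBigO_rpow (f := f) (s := γ + 1) (a := γ.re + 2) (b := 0)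
    (f.continuous.locallyIntegrable.locallyIntegrableOn _) ?_ (by simp) ?_
    (by simp; linarith)
  · simpa [MellinConvergent, mul_comm] using h
  · have h1 := (f.isBigO_cocompact_rpow (-(γ.re + 2))).mono atTop_le_cocompact
    refine h1.congr' EventuallyEq.rfl ?_
    filter_upwards [eventually_ge_atTop 0] with t ht
    rw [Real.norm_of_nonneg ht]
  · simpa using (f.continuous.continuousAt (x := 0)).isBigO_one ℝ |>.mono nhdsWithin_le_nhds

open Set Filter Topology Asymptotics in
lemma hl_tendsto_atTop (f : SchwartzMap ℝ ℂ) (γ : ℂ) :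
    Tendsto (fun ω : ℝ => f ω * (ω : ℂ) ^ γ) atTop (𝓝 0) := by
  have h1 := (f.isBigO_cocompact_rpow (-(γ.re + 1))).mono atTop_le_cocompact
  have h2 : (fun ω : ℝ => (ω : ℂ) ^ γ) =O[atTop] fun ω : ℝ => ω ^ γ.re := by
    refine IsBigO.of_bound 1 ?_
    filter_upwards [eventually_gt_atTop 0] with t ht
    rw [Complex.norm_cpow_eq_rpow_re_of_pos ht, one_mul]
    exact le_abs_self _
  refine (h1.mul h2).trans_tendsto ?_
  refine (tendsto_inv_atTop_zero (𝕜 := ℝ)).congr' ?_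
  filter_upwards [eventually_gt_atTop 0] with t ht
  rw [Real.norm_of_nonneg ht.le, ← Real.rpow_add ht, ← Real.rpow_neg_one]
  congr 1; ring

/-! ### One-sided oscillatory integrals and integration by parts -/

/-- The one-sided oscillatory integral `∫_0^∞ f(ω) ω^γ e^{iωx} dω`. -/
noncomputable def hl (f : ℝ → ℂ) (γ : ℂ) (x : ℝ) : ℂ :=
  ∫ ω : ℝ in Set.Ioi 0, f ω * (ω : ℂ) ^ γ * exp (I * (ω : ℂ) * (x : ℂ))

/-- The antiderivative `(e^{iωx} - κ)/(ix)` of `e^{iωx}`; the choice `κ = 1` makes it vanish at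
the origin. -/
noncomputable def osc (κ : ℂ) (x ω : ℝ) : ℂ := (exp (I * (ω : ℂ) * (x : ℂ)) - κ) / (I * x)

lemma norm_exp_osc (x ω : ℝ) : ‖exp (I * (ω : ℂ) * (x : ℂ))‖ = 1 := by
  rw [show I * (ω : ℂ) * (x : ℂ) = ((ω * x : ℝ) : ℂ) * I by push_cast; ring]
  exact norm_exp_ofReal_mul_I _

lemma continuous_osc (κ : ℂ) (x : ℝ) : Continuous (osc κ x) := by
  unfold osc; fun_prop

lemma norm_osc_le (κ : ℂ) (x ω : ℝ) : ‖osc κ x ω‖ ≤ (1 + ‖κ‖) / |x| := by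
  unfold osc
  rw [norm_div, norm_mul, norm_I, one_mul, norm_real, Real.norm_eq_abs]
  gcongr
  exact (norm_sub_le _ _).trans (by rw [norm_exp_osc])

lemma norm_osc_one_le (x : ℝ) {ω : ℝ} (hω : 0 ≤ ω) :
    ‖osc 1 x ω‖ ≤ |x|⁻¹ * min (|x| * ω) 2 := by
  unfold osc
  rw [norm_div, norm_mul, norm_I, one_mul, norm_real, Real.norm_eq_abs, div_eq_inv_mul]
  gcongr
  refine le_min ?_ ?_
  · have h := Real.norm_exp_I_mul_ofReal_sub_one_le (x := ω * x)
    rw [show I * ((ω * x : ℝ) : ℂ) = I * (ω : ℂ) * (x : ℂ) by push_cast; ring] at h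
    rwa [Real.norm_eq_abs, abs_mul, abs_of_nonneg hω, mul_comm ω] at h
  · refine (norm_sub_le _ _).trans ?_
    rw [norm_exp_osc]; norm_num

lemma hasDerivAt_osc (κ : ℂ) {x : ℝ} (hx : x ≠ 0) (ω : ℝ) :
    HasDerivAt (osc κ x) (exp (I * (ω : ℂ) * (x : ℂ))) ω := by
  have h0 : HasDerivAt (fun t : ℝ => I * (t : ℂ) * (x : ℂ)) (I * x) ω := by
    simpa using ((hasDerivAt_id ω).ofReal_comp.const_mul I).mul_const (x : ℂ)
  have h := ((h0.cexp).sub_const κ).div_const (I * x)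
  have hne : I * (x : ℂ) ≠ 0 := mul_ne_zero I_ne_zero (by exact_mod_cast hx)
  rwa [mul_div_cancel_right₀ _ hne] at h

/-- Integration by parts on the half-line, against the antiderivative `osc κ x`. The hypotheses at
the origin are left open since `κ` is chosen according to the sign of `Re γ`. -/
lemma hl_ibp (f : SchwartzMap ℝ ℂ) {γ : ℂ} (hγ : -1 < γ.re) (hγ0 : γ ≠ 0) (κ : ℂ) {x : ℝ}
    (hx : x ≠ 0)
    (hint : IntegrableOn (fun ω : ℝ => f ω * (ω : ℂ) ^ (γ - 1) * osc κ x ω) (Set.Ioi 0))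
    (h0 : Filter.Tendsto (fun ω : ℝ => f ω * (ω : ℂ) ^ γ * osc κ x ω)
      (nhdsWithin 0 (Set.Ioi 0)) (nhds 0)) :
    hl f γ x = -((∫ ω : ℝ in Set.Ioi 0, deriv f ω * (ω : ℂ) ^ γ * osc κ x ω) +
      γ * ∫ ω : ℝ in Set.Ioi 0, f ω * (ω : ℂ) ^ (γ - 1) * osc κ x ω) := by
  have hb : ∀ᵐ ω ∂(volume.restrict (Set.Ioi (0 : ℝ))), ‖osc κ x ω‖ ≤ (1 + ‖κ‖) / |x| :=
    Filter.Eventually.of_forall fun ω => norm_osc_le κ x ω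
  have hint' : IntegrableOn (fun ω : ℝ => deriv f ω * (ω : ℂ) ^ γ * osc κ x ω) (Set.Ioi 0) :=
    (hl_integrable (SchwartzMap.derivCLM ℂ ℂ f) hγ).mul_bdd
      (continuous_osc κ x).aestronglyMeasurable hb
  have hinf : Filter.Tendsto (fun ω : ℝ => f ω * (ω : ℂ) ^ γ * osc κ x ω) Filter.atTop
      (nhds 0) := by
    have := (hl_tendsto_atTop f γ).zero_mul_isBoundedUnder_le
      (g := osc κ x) (Filter.isBoundedUnder_of ⟨_, fun ω => norm_osc_le κ x ω⟩)
    simpa using this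
  have key := integral_Ioi_mul_deriv_eq_deriv_mul (a := 0) (a' := 0) (b' := 0)
    (u := fun ω : ℝ => f ω * (ω : ℂ) ^ γ)
    (u' := fun ω : ℝ => deriv f ω * (ω : ℂ) ^ γ + f ω * (γ * (ω : ℂ) ^ (γ - 1)))
    (v := osc κ x) (v' := fun ω : ℝ => exp (I * (ω : ℂ) * (x : ℂ)))
    (fun ω hω => (f.differentiableAt.hasDerivAt).mul
      (hasDerivAt_ofReal_cpow_const (ne_of_gt hω) hγ0))
    (fun ω _ => hasDerivAt_osc κ hx ω)
    ((hl_integrable f hγ).mul_bdd (c := 1)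
      (Continuous.aestronglyMeasurable (by fun_prop))
      (Filter.Eventually.of_forall fun ω => (norm_exp_osc x ω).le))
    ((hint'.add (hint.const_mul γ)).congr (Filter.Eventually.of_forall fun ω => by
      simp only [Pi.add_apply, Pi.mul_apply]; ring)) h0 hinf
  rw [hl, key, ← integral_const_mul, ← integral_add hint' (hint.const_mul γ)]
  simp only [sub_zero, zero_sub]
  congr 2
  ext ω
  ring

/-- For `Re γ > 0` there is no boundary term, and one integration by parts gains a factor `1/x`,
falling either on `f` or on `ω^γ`. -/
lemma hl_recurrence (f : SchwartzMap ℝ ℂ) {γ : ℂ} (hγ : 0 < γ.re) {x : ℝ} (hx : x ≠ 0) :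
    ‖hl f γ x‖ ≤ (‖hl (SchwartzMap.derivCLM ℂ ℂ f) γ x‖ + ‖γ‖ * ‖hl f (γ - 1) x‖) / |x| := by
  have hγ0 : γ ≠ 0 := by rintro rfl; simp at hγ
  have h := hl_ibp f (by linarith) hγ0 0 hx
    ((hl_integrable f (γ := γ - 1) (by simp; linarith)).mul_bdd
      (continuous_osc 0 x).aestronglyMeasurable
      (Filter.Eventually.of_forall fun ω => norm_osc_le 0 x ω)) ?_
  · have e : ∀ (g : ℝ → ℂ) (δ : ℂ), ∫ ω : ℝ in Set.Ioi 0, g ω * (ω : ℂ) ^ δ * osc 0 x ω =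
        hl g δ x / (I * x) := by
      intro g δ
      rw [hl, ← integral_div]
      congr 1; ext ω; simp only [osc]; ring
    rw [e, e] at h
    rw [h, norm_neg, ← mul_div_assoc, ← add_div, norm_div, norm_mul I, norm_I, one_mul, norm_real,
      Real.norm_eq_abs]
    gcongr
    refine (norm_add_le _ _).trans ?_
    rw [norm_mul]
    rfl
  · have hc : ContinuousAt (fun ω : ℝ => f ω * (ω : ℂ) ^ γ * osc 0 x ω) 0 :=
      (f.continuous.continuousAt.mul (continuousAt_ofReal_cpow_const _ _ (Or.inl hγ))).mul
        (continuous_osc 0 x).continuousAt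
    have := hc.tendsto.mono_left (nhdsWithin_le_nhds (s := Set.Ioi 0))
    simpa [zero_cpow hγ0] using this

/-! ### Decay of the one-sided integrals -/

open Set Filter Topology Asymptotics in
/-- The kernel `u^{σ-1} min(u, 2)` behaves like `u^σ` at the origin and like `u^{σ-1}` at infinity,
which is where both bounds on `σ` are needed. -/
lemma integrable_kernel {σ : ℝ} (h1 : -1 < σ) (h2 : σ < 0) :
    IntegrableOn (fun u : ℝ => u ^ (σ - 1) * min u 2) (Ioi 0) := by
  refine mellin_convergent_of_isBigO_scalar (a := 0) (b := -1)
    ((continuous_id.min continuous_const).locallyIntegrable.locallyIntegrableOn _) ?_ h2 ?_ h1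
  · refine IsBigO.of_bound 2 ?_
    filter_upwards [eventually_gt_atTop 0] with t ht
    rw [Real.norm_of_nonneg (by positivity)]
    simp
  · refine IsBigO.of_bound 1 ?_
    filter_upwards [self_mem_nhdsWithin] with t ht
    have ht : 0 < t := ht
    rw [Real.norm_of_nonneg (by positivity)]
    simp [abs_of_pos ht]

/-- Negative exponents: integrating by parts against the antiderivative of `e^{iωx}` vanishing at
the origin, the singular factor `ω^{γ-1}` becomes integrable and the substitution `u = |x| ω`
extracts the power of `|x|`. -/
lemma hl_decay_neg (f : SchwartzMap ℝ ℂ) {γ : ℂ} (h1 : -1 < γ.re) (h2 : γ.re < 0) :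
    ∃ C : ℝ, 0 ≤ C ∧ ∀ x : ℝ, x ≠ 0 → ‖hl f γ x‖ ≤ C * |x| ^ (-(γ.re + 1)) := by
  have hγ0 : γ ≠ 0 := by rintro rfl; simp at h2
  obtain ⟨M, hM⟩ : ∃ M : ℝ, ∀ ω, ‖f ω‖ ≤ M := by
    obtain ⟨M, -, hM⟩ := f.decay 0 0
    exact ⟨M, fun ω => by simpa using hM ω⟩
  have hM0 : 0 ≤ M := (norm_nonneg _).trans (hM 0)
  set σ := γ.re with hσ
  set D := ∫ ω : ℝ in Set.Ioi 0, ‖deriv f ω‖ with hD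
  set K := ∫ u : ℝ in Set.Ioi 0, u ^ (σ - 1) * min u 2 with hK
  have hD0 : 0 ≤ D := integral_nonneg fun _ => norm_nonneg _
  have hK0 : 0 ≤ K := setIntegral_nonneg measurableSet_Ioi fun u hu => by
    have : 0 < u := hu
    positivity
  refine ⟨2 * D + ‖γ‖ * (M * K), by positivity, fun x hx => ?_⟩
  have hx' : 0 < |x| := abs_pos.mpr hx
  have hosc : ∀ ω : ℝ, 0 < ω → ‖osc 1 x ω‖ ≤ ω := fun ω hω => by
    refine (norm_osc_one_le x hω.le).trans ?_
    calc |x|⁻¹ * min (|x| * ω) 2 ≤ |x|⁻¹ * (|x| * ω) := by gcongr; exact min_le_left _ _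
      _ = ω := by field_simp
  have h := hl_ibp f h1 hγ0 1 hx ?_ ?_
  · have b1 : ‖∫ ω : ℝ in Set.Ioi 0, deriv f ω * (ω : ℂ) ^ γ * osc 1 x ω‖ ≤
        2 * D * |x| ^ (-(σ + 1)) := by
      rw [show 2 * D * |x| ^ (-(σ + 1)) = ∫ ω : ℝ in Set.Ioi 0,
        (2 * |x| ^ (-(σ + 1))) * ‖deriv f ω‖ by rw [integral_const_mul]; ring]
      refine norm_integral_le_of_norm_le
        (((SchwartzMap.derivCLM ℂ ℂ f).integrable.norm.const_mul _).integrableOn) ?_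
      filter_upwards [ae_restrict_mem measurableSet_Ioi] with ω hω
      have hω : 0 < ω := hω
      have hu : 0 < |x| * ω := by positivity
      -- interpolation between the two terms of the minimum
      have hm : min (|x| * ω) 2 ≤ 2 * (|x| * ω) ^ (-σ) := by
        rcases le_total (|x| * ω) 1 with h | h
        · have := Real.rpow_le_rpow_of_exponent_ge hu h (show -σ ≤ 1 by linarith)
          rw [Real.rpow_one] at this
          have h3 : 0 ≤ (|x| * ω) ^ (-σ) := by positivity
          exact (min_le_left _ _).trans (by linarith)
        · have := Real.one_le_rpow h (show 0 ≤ -σ by linarith)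
          exact (min_le_right _ _).trans (by linarith)
      rw [norm_mul, norm_mul, norm_cpow_eq_rpow_re_of_pos hω, ← hσ]
      calc ‖deriv f ω‖ * ω ^ σ * ‖osc 1 x ω‖
          ≤ ‖deriv f ω‖ * ω ^ σ * (|x|⁻¹ * (2 * (|x| * ω) ^ (-σ))) := by
            gcongr
            exact (norm_osc_one_le x hω.le).trans (by gcongr)
        _ = 2 * |x| ^ (-(σ + 1)) * ‖deriv f ω‖ := by
            rw [Real.mul_rpow hx'.le hω.le, neg_add, Real.rpow_add hx', Real.rpow_neg_one,
              Real.rpow_neg hω.le]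
            have : ω ^ σ ≠ 0 := by positivity
            field_simp
    have b2 : ‖∫ ω : ℝ in Set.Ioi 0, f ω * (ω : ℂ) ^ (γ - 1) * osc 1 x ω‖ ≤
        M * K * |x| ^ (-(σ + 1)) := by
      have hsc := integral_comp_mul_left_Ioi (fun u : ℝ => u ^ (σ - 1) * min u 2) 0 hx'
      rw [mul_zero, ← hK, smul_eq_mul] at hsc
      rw [show M * K * |x| ^ (-(σ + 1)) = ∫ ω : ℝ in Set.Ioi 0,
        (M * |x| ^ (-σ)) * ((|x| * ω) ^ (σ - 1) * min (|x| * ω) 2) by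
          rw [integral_const_mul, hsc, neg_add, Real.rpow_add hx', Real.rpow_neg_one]; ring]
      refine norm_integral_le_of_norm_le (Integrable.const_mul ?_ _) ?_
      · have := (integrableOn_Ioi_comp_mul_left_iff (fun u : ℝ => u ^ (σ - 1) * min u 2) 0 hx').2
          (by rw [mul_zero]; exact integrable_kernel h1 h2)
        exact this
      filter_upwards [ae_restrict_mem measurableSet_Ioi] with ω hω
      have hω : 0 < ω := hω
      rw [norm_mul, norm_mul, norm_cpow_eq_rpow_re_of_pos hω, sub_re, one_re, ← hσ]
      calc ‖f ω‖ * ω ^ (σ - 1) * ‖osc 1 x ω‖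
          ≤ M * ω ^ (σ - 1) * (|x|⁻¹ * min (|x| * ω) 2) := by
            gcongr
            · exact hM ω
            · exact norm_osc_one_le x hω.le
        _ = M * |x| ^ (-σ) * ((|x| * ω) ^ (σ - 1) * min (|x| * ω) 2) := by
            rw [Real.mul_rpow hx'.le hω.le, Real.rpow_sub hx', Real.rpow_neg hx'.le, Real.rpow_one]
            have : |x| ^ σ ≠ 0 := by positivity
            field_simp
    rw [h, norm_neg]
    refine (norm_add_le _ _).trans ?_
    rw [norm_mul]
    calc _ ≤ 2 * D * |x| ^ (-(σ + 1)) + ‖γ‖ * (M * K * |x| ^ (-(σ + 1))) := by gcongr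
      _ = _ := by ring
  · -- `osc 1 x ω / ω` is bounded by `1`, so `f ω^γ` dominates
    refine Integrable.mono (hl_integrable f h1) ?_ ?_
    · refine ((ContinuousOn.mul f.continuous.continuousOn ?_).mul
        (continuous_osc 1 x).continuousOn).aestronglyMeasurable measurableSet_Ioi
      intro ω hω
      exact (continuousAt_ofReal_cpow_const _ _ (Or.inr (ne_of_gt hω))).continuousWithinAt
    · filter_upwards [ae_restrict_mem measurableSet_Ioi] with ω hω
      have hω : 0 < ω := hω
      rw [norm_mul, norm_mul, norm_mul, norm_cpow_eq_rpow_re_of_pos hω,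
        norm_cpow_eq_rpow_re_of_pos hω, sub_re, one_re, ← hσ, mul_assoc]
      gcongr
      calc ω ^ (σ - 1) * ‖osc 1 x ω‖ ≤ ω ^ (σ - 1) * ω := by gcongr; exact hosc ω hω
        _ = ω ^ σ := by rw [Real.rpow_sub_one hω.ne']; field_simp
  · have ht : Filter.Tendsto (fun ω : ℝ => M * ω ^ (σ + 1)) (nhdsWithin 0 (Set.Ioi 0))
        (nhds 0) := by
      have := ((Real.continuousAt_rpow_const 0 (σ + 1) (Or.inr (by linarith))).tendsto.const_mul
        M).mono_left (nhdsWithin_le_nhds (s := Set.Ioi 0))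
      simpa [Real.zero_rpow (show σ + 1 ≠ 0 by linarith)] using this
    refine squeeze_zero_norm' ?_ ht
    filter_upwards [self_mem_nhdsWithin] with ω hω
    have hω : 0 < ω := hω
    rw [norm_mul, norm_mul, norm_cpow_eq_rpow_re_of_pos hω, ← hσ, Real.rpow_add_one hω.ne',
      ← mul_assoc]
    gcongr
    · exact hM ω
    · exact hosc ω hω

lemma hl_bounded (f : SchwartzMap ℝ ℂ) (γ : ℂ) :
    ∃ C : ℝ, 0 ≤ C ∧ ∀ x : ℝ, ‖hl f γ x‖ ≤ C := by
  refine ⟨∫ ω : ℝ in Set.Ioi 0, ‖f ω * (ω : ℂ) ^ γ‖, integral_nonneg fun _ => norm_nonneg _,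
    fun x => (norm_integral_le_integral_norm _).trans (le_of_eq ?_)⟩
  congr 1; ext ω
  rw [norm_mul _ (exp _), norm_exp_osc, mul_one]

/-- Induction on the number of integrations by parts. The truncated exponent
`min n (Re γ + 1)` is what makes the step close up: in the recurrence, `f'` enters with the
same `γ`, so it can only be assumed to decay to order `n`. -/
lemma hl_decay_aux (n : ℕ) : ∀ (f : SchwartzMap ℝ ℂ) (γ : ℂ), -1 < γ.re →
    (∀ m : ℕ, γ.re ≠ m) → ∃ C : ℝ, 0 ≤ C ∧ ∀ x : ℝ, 1 ≤ |x| →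
      ‖hl f γ x‖ ≤ C * |x| ^ (-(min (n : ℝ) (γ.re + 1))) := by
  induction n with
  | zero =>
    intro f γ hγ _
    obtain ⟨C, hC, h⟩ := hl_bounded f γ
    refine ⟨C, hC, fun x _ => ?_⟩
    rw [Nat.cast_zero, min_eq_left (by linarith), neg_zero, Real.rpow_zero, mul_one]
    exact h x
  | succ n ih =>
    intro f γ hγ hm
    rcases lt_or_gt_of_ne (show γ.re ≠ 0 by simpa using hm 0) with h0 | h0
    · obtain ⟨C, hC, h⟩ := hl_decay_neg f hγ h0
      refine ⟨C, hC, fun x hx => (h x (abs_pos.mp (by linarith))).trans ?_⟩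
      gcongr
      · exact min_le_right _ _
    · obtain ⟨C₁, hC₁, k₁⟩ := ih (SchwartzMap.derivCLM ℂ ℂ f) γ hγ hm
      obtain ⟨C₂, hC₂, k₂⟩ := ih f (γ - 1) (by simp; linarith) (fun m hm' => hm (m + 1) (by
        simp at hm'; push_cast; linarith))
      refine ⟨C₁ + ‖γ‖ * C₂, by positivity, fun x hx => ?_⟩
      have hx0 : 0 < |x| := by linarith
      refine (hl_recurrence f h0 (abs_pos.mp hx0)).trans ?_
      rw [div_le_iff₀ hx0]
      have e : |x| ^ (-(min ((n + 1 : ℕ) : ℝ) (γ.re + 1))) * |x| = |x| ^ (-(min (n : ℝ) γ.re)) := by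
        rw [← Real.rpow_add_one hx0.ne']
        congr 1
        push_cast
        rw [min_add_add_right]; ring
      rw [mul_assoc, e, add_mul, mul_assoc]
      have l₁ := k₁ x hx
      have l₂ := k₂ x hx
      rw [sub_re, one_re, sub_add_cancel] at l₂
      have l₁' : C₁ * |x| ^ (-(min (n : ℝ) (γ.re + 1))) ≤ C₁ * |x| ^ (-(min (n : ℝ) γ.re)) := by
        gcongr
        linarith
      gcongr
      exact l₁.trans l₁'

lemma hl_decay (f : SchwartzMap ℝ ℂ) {γ : ℂ} (hγ : -1 < γ.re) (hm : ∀ m : ℕ, γ.re ≠ m) :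
    ∃ C : ℝ, 0 ≤ C ∧ ∀ x : ℝ, ‖hl f γ x‖ ≤ C / (1 + |x| ^ (γ.re + 1)) := by
  obtain ⟨n, hn⟩ := exists_nat_ge (γ.re + 1)
  obtain ⟨C₁, hC₁, k₁⟩ := hl_decay_aux n f γ hγ hm
  obtain ⟨C₂, hC₂, k₂⟩ := hl_bounded f γ
  refine ⟨C₁ + 2 * C₂, by positivity, fun x => ?_⟩
  rw [le_div_iff₀ (by positivity)]
  have hp : 0 ≤ |x| ^ (γ.re + 1) := by positivity
  rcases le_total 1 |x| with hx | hx
  · have h := k₁ x hx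
    have hx0 : 0 < |x| := by linarith
    rw [min_eq_right hn, Real.rpow_neg hx0.le, ← div_eq_mul_inv, le_div_iff₀ (by positivity)] at h
    linarith [k₂ x]
  · have : |x| ^ (γ.re + 1) ≤ 1 := Real.rpow_le_one (abs_nonneg x) hx (by linarith)
    have := mul_le_mul (k₂ x) this hp hC₂
    linarith [k₂ x]

/-! ### Reduction of the derivative to the half-line -/

open scoped FourierTransform in
/-- `FT φ` is Mathlib's Fourier transform of `φ` rescaled by `1/(2π)`, hence a Schwartz function. -/
lemma exists_schwartz_FT (φ : SchwartzMap ℝ ℂ) : ∃ f : SchwartzMap ℝ ℂ, ∀ ω, f ω = FT φ ω := by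
  have hc : (2 * Real.pi)⁻¹ ≠ 0 := by positivity
  refine ⟨SchwartzMap.compCLMOfContinuousLinearEquiv ℂ
    (ContinuousLinearEquiv.unitsEquivAut ℝ (Units.mk0 _ hc)) (𝓕 φ), fun ω => ?_⟩
  simp only [SchwartzMap.compCLMOfContinuousLinearEquiv_apply, Function.comp_apply,
    SchwartzMap.fourier_coe, ContinuousLinearEquiv.unitsEquivAut_apply, Units.val_mk0]
  rw [Real.fourier_real_eq_integral_exp_smul, FT]
  congr 1; ext v
  rw [smul_eq_mul, mul_comm]
  congr 2
  have : (Real.pi : ℂ) ≠ 0 := by exact_mod_cast Real.pi_ne_zero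
  push_cast
  field_simp

lemma Dop_eq (a b : ℂ) {γ : ℂ} (hγ : -1 < γ.re) (φ : ℝ → ℂ) (f g : SchwartzMap ℝ ℂ)
    (hf : ∀ ω, f ω = FT φ ω) (hg : ∀ ω, g ω = f (-ω)) (x : ℝ) :
    Dop a b γ φ x = (1 / (2 * (Real.pi : ℂ))) * (a * hl f γ x + b * hl g γ (-x)) := by
  have hint : ∀ (k : SchwartzMap ℝ ℂ) (y : ℝ), IntegrableOn
      (fun ω : ℝ => k ω * (ω : ℂ) ^ γ * exp (I * (ω : ℂ) * (y : ℂ))) (Set.Ioi 0) := fun k y =>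
    (hl_integrable k hγ).mul_bdd (c := 1)
      (Continuous.aestronglyMeasurable (by fun_prop))
      (Filter.Eventually.of_forall fun ω => (norm_exp_osc y ω).le)
  set F : ℝ → ℂ := fun ω => FT φ ω * hab a b γ ω * exp (I * (ω : ℂ) * (x : ℂ)) with hF
  have ep : Set.EqOn F (fun ω : ℝ => a * (f ω * (ω : ℂ) ^ γ * exp (I * (ω : ℂ) * (x : ℂ))))
      (Set.Ioi 0) := fun ω hω => by
    have hω : 0 < ω := hω
    simp only [hF, hab, if_pos hω, hf]; ring
  have en : Set.EqOn (fun ω => F (-ω))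
      (fun ω : ℝ => b * (g ω * (ω : ℂ) ^ γ * exp (I * (ω : ℂ) * ((-x : ℝ) : ℂ))))
      (Set.Ioi 0) := fun ω hω => by
    have hω : 0 < ω := hω
    simp only [hF, hab, if_neg (show ¬ 0 < -ω by linarith), if_pos (show -ω < 0 by linarith),
      hg, hf, neg_neg]
    push_cast
    ring_nf
  have ip : IntegrableOn F (Set.Ioi 0) :=
    IntegrableOn.congr_fun ((hint f x).const_mul a) ep.symm measurableSet_Ioi
  have i_n : IntegrableOn (fun ω => F (-ω)) (Set.Ioi 0) :=
    IntegrableOn.congr_fun ((hint g (-x)).const_mul b) en.symm measurableSet_Ioi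
  have i_n' : IntegrableOn F (Set.Iic 0) := by
    rw [integrableOn_Iic_iff_integrableOn_Iio]
    have h := (Measure.measurePreserving_neg (volume : Measure ℝ)).integrableOn_comp_preimage
      (Homeomorph.neg ℝ).measurableEmbedding (f := F) (s := Set.Iio 0)
    refine h.1 ?_
    rw [Set.neg_preimage, Set.neg_Iio, neg_zero]
    exact i_n
  have h1 : ∫ ω in Set.Iic 0, F ω = b * hl g γ (-x) := by
    have := integral_comp_neg_Ioi 0 F
    rw [neg_zero] at this
    rw [← this, setIntegral_congr_fun measurableSet_Ioi en, integral_const_mul, hl]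
  have h2 : ∫ ω in Set.Ioi 0, F ω = a * hl f γ x := by
    rw [setIntegral_congr_fun measurableSet_Ioi ep, integral_const_mul, hl]
  rw [Dop, ← intervalIntegral.integral_Iic_add_Ioi i_n' ip, h1, h2, add_comm]

/-- decay of `D_{a,b}^γ φ` when `Re γ > -1` is not a nonnegative integer. -/
theorem statement1 (a b γ : ℂ) (ha : a ≠ 0) (hb : b ≠ 0) (hγ : -1 < γ.re)
    (hγ' : ∀ n : ℕ, γ.re ≠ (n : ℝ)) (φ : SchwartzMap ℝ ℂ) :
    ∃ c : ℝ, 0 < c ∧ ∀ x : ℝ,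
      ‖Dop a b γ ⇑φ x‖ ≤ c / (1 + |x| ^ (γ.re + 1)) := by
  obtain ⟨f, hf⟩ := exists_schwartz_FT φ
  obtain ⟨g, hg⟩ : ∃ g : SchwartzMap ℝ ℂ, ∀ ω, g ω = f (-ω) :=
    ⟨SchwartzMap.compCLMOfContinuousLinearEquiv ℂ (ContinuousLinearEquiv.neg ℝ) f,
      fun ω => by simp⟩
  obtain ⟨C₁, hC₁, k₁⟩ := hl_decay f hγ hγ'
  obtain ⟨C₂, hC₂, k₂⟩ := hl_decay g hγ hγ'
  set P := ‖1 / (2 * (Real.pi : ℂ))‖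
  refine ⟨P * (‖a‖ * C₁ + ‖b‖ * C₂) + 1, by positivity, fun x => ?_⟩
  have l₂ := k₂ (-x)
  rw [abs_neg] at l₂
  rw [Dop_eq a b hγ φ f g hf hg x, norm_mul]
  calc P * ‖a * hl f γ x + b * hl g γ (-x)‖
      ≤ P * (‖a‖ * (C₁ / (1 + |x| ^ (γ.re + 1))) + ‖b‖ * (C₂ / (1 + |x| ^ (γ.re + 1)))) := by
        gcongr
        refine (norm_add_le _ _).trans ?_
        rw [norm_mul, norm_mul]
        gcongr
        exact k₁ x
    _ = (P * (‖a‖ * C₁ + ‖b‖ * C₂)) / (1 + |x| ^ (γ.re + 1)) := by ring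
    _ ≤ _ := by gcongr; linarith
end

section
/- Let a, b ∈ ℂ \ {0}, γ ∈ ℂ with Re(γ) > 0, and let k be an integer with k ≥ max(1, ⌊Re(γ)⌋). Then for every Schwartz function φ : ℝ → ℂ, every T > 0, and every x ∈ ℝ, one has I_{a,b}^{γ;k}{y ↦ φ(T y)}(x) = T^{−γ} · (I_{a,b}^{γ;k} φ)(T x); i.e., the integration operator I_{a,b}^{γ;k} is scale-invariant of degree −γ. -/
/-! The substitution `ω = T u` in the integral defining `Iop` gives the result: the multiplier is
homogeneous of degree `γ` (`hab_scale`), dilating `φ` by `T` rescales its Fourier transform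
(`FT_scale`), and the exponential with its Taylor polynomial depends only on the product `ω x`, so the
dilation passes to `x`. The Jacobian `T` cancels the factor `T⁻¹` from the Fourier transform. These
identities hold for Bochner integrals without any integrability assumption. -/

open MeasureTheory Complex

theorem hab_scale (a b γ : ℂ) {T : ℝ} (hT : 0 < T) (u : ℝ) :
    hab a b γ (T * u) = (T : ℂ) ^ γ * hab a b γ u := by
  unfold hab
  rcases lt_trichotomy u 0 with hu | rfl | hu
  · have h1 : T * u < 0 := mul_neg_of_pos_of_neg hT hu
    have h2 : -(T * u) = T * (-u) := by ring
    rw [if_neg h1.not_gt, if_pos h1, if_neg hu.not_gt, if_pos hu, h2, ofReal_mul,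
      mul_cpow_ofReal_nonneg hT.le (neg_pos.2 hu).le]
    ring
  · simp
  · rw [if_pos (mul_pos hT hu), if_pos hu, ofReal_mul, mul_cpow_ofReal_nonneg hT.le hu.le]
    ring

theorem FT_scale (φ : ℝ → ℂ) {T : ℝ} (hT : 0 < T) (u : ℝ) :
    FT (fun y => φ (T * y)) (T * u) = (T : ℂ)⁻¹ * FT φ u := by
  have h := Measure.integral_comp_mul_left
    (fun x : ℝ => φ x * Complex.exp (-(Complex.I * (u : ℂ) * (x : ℂ)))) T
  rw [abs_of_pos (inv_pos.2 hT), Complex.real_smul, ofReal_inv] at h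
  unfold FT
  rw [← h]
  congr 1
  ext x
  push_cast
  ring_nf

/-- the integration operator `I_{a,b}^{γ;k}` is scale-invariant of degree `-γ`. -/
theorem statement5 (a b γ : ℂ) (ha : a ≠ 0) (hb : b ≠ 0) (hγ : 0 < γ.re)
    (k : ℕ) (hk1 : 1 ≤ k) (hk : ⌊γ.re⌋ ≤ (k : ℤ)) (φ : SchwartzMap ℝ ℂ) :
    ∀ T : ℝ, 0 < T → ∀ x : ℝ,
      Iop a b γ k (fun y => φ (T * y)) x = (T : ℂ) ^ (-γ) * Iop a b γ k ⇑φ (T * x) := by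
  intro T hT x
  have hT0 : (T : ℂ) ≠ 0 := ofReal_ne_zero.2 hT.ne'
  unfold Iop
  set F : ℝ → ℂ := fun ω => FT (fun y => φ (T * y)) ω *
      ((Complex.exp (Complex.I * (ω : ℂ) * (x : ℂ)) -
        ∑ j ∈ Finset.range k, (Complex.I * (x : ℂ)) ^ j * (ω : ℂ) ^ j / (j.factorial : ℂ)) /
        hab a b γ ω) with hF
  have h := Measure.integral_comp_mul_left F T
  rw [abs_of_pos (inv_pos.2 hT), Complex.real_smul, ofReal_inv] at h
  have h' : ∫ ω, F ω = (T : ℂ) * ∫ u, F (T * u) := by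
    rw [h, mul_inv_cancel_left₀ hT0]
  rw [h', mul_left_comm ((T : ℂ) ^ (-γ))]
  congr 1
  rw [← integral_const_mul, ← integral_const_mul]
  congr 1
  ext u
  simp only [hF]
  rw [FT_scale (⇑φ) hT, hab_scale a b γ hT, cpow_neg]
  have e1 : Complex.I * ((T * u : ℝ) : ℂ) * (x : ℂ) = Complex.I * (u : ℂ) * ((T * x : ℝ) : ℂ) := by
    push_cast
    ring
  have e2 : ∀ j : ℕ, (Complex.I * (x : ℂ)) ^ j * ((T * u : ℝ) : ℂ) ^ j =
      (Complex.I * ((T * x : ℝ) : ℂ)) ^ j * (u : ℂ) ^ j := by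
    intro j
    rw [← mul_pow, ← mul_pow]
    push_cast
    ring
  simp only [e1, e2]
  rw [div_eq_mul_inv, div_eq_mul_inv, mul_inv, mul_assoc, mul_inv_cancel_left₀ hT0]
  ring
end

section
/- Let a, b ∈ ℂ \ {0} and γ ∈ ℂ with Re(γ) > 0, Re(γ) ∉ ℕ, and set k = ⌊Re(γ)⌋, assuming k ≥ 1. Then for every Schwartz function φ : ℝ → ℂ, the function g_φ(ω) = (φ̂(ω) − Σ_{j=0}^{k−1} φ̂^{(j)}(0) ω^j / j!) / h_{a,b}^γ(−ω) (defined for ω ≠ 0) is Lebesgue integrable on ℝ, and consequently (I_{a,b}^{(γ;k)*} φ)(x) = (1/(2π)) ∫_ℝ g_φ(ω) e^{iωx} dω is a bounded continuous function of x on all of ℝ. -/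
/-! The numerator `φ̂(ω) - ∑_{j<k} φ̂⁽ʲ⁾(0) ω^j / j!` is `O(|ω|^k)` at the origin by Taylor's theorem
(`taylor_remainder_isBigO`), since `φ̂` is smooth. As `k < Re γ < k + 1`, division by `|ω|^γ` leaves
the singularity `|ω|^(k - Re γ)`, with exponent above `-1`. Away from the origin every summand is
integrable on its own: `φ̂` is bounded and `Re γ > 1`, and `|ω|^(j - Re γ)` has exponent below `-1`
for `j ≤ k - 1`. This is `integrableOn_Ioi_sub_poly_div_cpow` on the positive half-line; the negative
half-line follows by the reflection `ω ↦ -ω`. Continuity and boundedness of `I* φ` are then general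
facts about the inverse Fourier integral of an integrable function. -/

open MeasureTheory Complex

open Filter Topology Asymptotics Set

/-- `FT` is Mathlib's Fourier transform after rescaling the frequency by `2π`. -/
lemma FT_eq (φ : SchwartzMap ℝ ℂ) (ω : ℝ) :
    FT ⇑φ ω = FourierTransform.fourier φ (ω / (2 * Real.pi)) := by
  rw [SchwartzMap.fourier_coe, Real.fourier_real_eq_integral_exp_smul]
  unfold FT
  congr 1
  ext x
  rw [smul_eq_mul, mul_comm]
  congr 2
  have : (Real.pi : ℂ) ≠ 0 := by exact_mod_cast Real.pi_ne_zero
  push_cast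
  field_simp

lemma FT_contDiff (φ : SchwartzMap ℝ ℂ) (n : ℕ) : ContDiff ℝ n (FT ⇑φ) := by
  rw [funext (FT_eq φ)]
  exact ((FourierTransform.fourier φ).smooth n).comp (contDiff_id.div_const _)

lemma FT_bounded (φ : SchwartzMap ℝ ℂ) : ∃ B : ℝ, ∀ ω, ‖FT ⇑φ ω‖ ≤ B := by
  refine ⟨∫ x, ‖φ x‖, fun ω => (norm_integral_le_integral_norm _).trans_eq ?_⟩
  congr 1
  ext x
  rw [norm_mul, show -(I * (ω : ℂ) * (x : ℂ)) = ((-(ω * x) : ℝ) : ℂ) * I by push_cast; ring,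
    norm_exp_ofReal_mul_I, mul_one]

/-- Dropping the top term of the order-`k` Taylor polynomial turns the `o(ω^k)` remainder
into `O(ω^k)`. -/
lemma taylor_remainder_isBigO {F : ℝ → ℂ} {k : ℕ} (hF : ContDiff ℝ k F) :
    (fun ω : ℝ => F ω - ∑ j ∈ Finset.range k, iteratedDeriv j F 0 / (j.factorial : ℂ) * (ω : ℂ) ^ j)
      =O[𝓝 0] fun ω => ω ^ k := by
  have h := (taylor_isLittleO_univ (x₀ := 0) hF).isBigO
  have h2 : (fun ω : ℝ => iteratedDeriv k F 0 / (k.factorial : ℂ) * (ω : ℂ) ^ k)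
      =O[𝓝 0] fun ω : ℝ => (ω - 0) ^ k := by
    refine IsBigO.of_bound ‖iteratedDeriv k F 0 / (k.factorial : ℂ)‖ (Eventually.of_forall ?_)
    intro ω
    simp
  refine (h.add h2).congr (fun ω => ?_) (fun ω => by simp)
  rw [taylor_within_apply, Finset.sum_range_succ]
  have e : ∀ j, (((j.factorial : ℝ)⁻¹ * (ω - 0) ^ j) • iteratedDerivWithin j F univ 0 : ℂ)
      = iteratedDeriv j F 0 / (j.factorial : ℂ) * (ω : ℂ) ^ j := by
    intro j
    rw [iteratedDerivWithin_univ, Complex.real_smul]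
    push_cast
    rw [sub_zero]
    ring
  simp only [e]
  ring

/-- Integrability on the positive half-line of a bounded function minus a polynomial of degree
below `k`, divided by `ω^γ` with `k < Re γ < k + 1`, when the numerator is `O(ω^k)` at `0`. -/
lemma integrableOn_Ioi_sub_poly_div_cpow {F : ℝ → ℂ} (hF : Continuous F) {B : ℝ}
    (hB : ∀ ω, ‖F ω‖ ≤ B) {k : ℕ} (hk1 : 1 ≤ k) {γ : ℂ} (h1 : (k : ℝ) < γ.re)
    (h2 : γ.re < k + 1) (c : ℕ → ℂ)
    (hO : (fun ω : ℝ => F ω - ∑ j ∈ Finset.range k, c j * (ω : ℂ) ^ j) =O[𝓝 0] fun ω => ω ^ k) :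
    IntegrableOn (fun ω : ℝ => (F ω - ∑ j ∈ Finset.range k, c j * (ω : ℂ) ^ j) / (ω : ℂ) ^ γ)
      (Ioi 0) := by
  have hk1' : (1 : ℝ) ≤ k := by exact_mod_cast hk1
  obtain ⟨C, hC⟩ := hO.bound
  obtain ⟨ε, hε, hball⟩ := Metric.eventually_nhds_iff.1 hC
  have hcont : ContinuousOn
      (fun ω : ℝ => (F ω - ∑ j ∈ Finset.range k, c j * (ω : ℂ) ^ j) / (ω : ℂ) ^ γ) (Ioi 0) := by
    refine ContinuousOn.div (by fun_prop) (fun t ht => ?_) (fun t ht => ?_)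
    · exact (continuousAt_ofReal_cpow_const _ _ (Or.inr (ne_of_gt ht))).continuousWithinAt
    · rw [Ne, cpow_eq_zero_iff]
      rintro ⟨h, -⟩
      exact (ne_of_gt ht) (by exact_mod_cast h)
  have hsplit : Ioi (0 : ℝ) = Ioo 0 ε ∪ Ioi (ε / 2) := by
    ext x
    simp only [mem_Ioi, mem_union, mem_Ioo]
    constructor
    · intro h
      by_cases hx : x < ε
      · exact Or.inl ⟨h, hx⟩
      · right; linarith
    · rintro (h | h)
      · exact h.1
      · linarith
  rw [hsplit]
  refine IntegrableOn.union ?_ ?_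
  · have hg : IntegrableOn (fun ω : ℝ => C * ω ^ ((k : ℝ) - γ.re)) (Ioo 0 ε) :=
      ((intervalIntegral.integrableOn_Ioo_rpow_iff hε).2 (by linarith)).const_mul C
    refine Integrable.mono' hg
      ((hcont.mono Ioo_subset_Ioi_self).aestronglyMeasurable measurableSet_Ioo) ?_
    refine ae_restrict_of_forall_mem measurableSet_Ioo fun ω hω => ?_
    have hω0 : 0 < ω := hω.1
    have := hball (y := ω) (by rw [Real.dist_eq, sub_zero, abs_of_pos hω0]; exact hω.2)
    rw [norm_pow, Real.norm_of_nonneg hω0.le] at this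
    rw [norm_div, norm_cpow_eq_rpow_re_of_pos hω0, Real.rpow_sub hω0, Real.rpow_natCast,
      ← mul_div_assoc]
    gcongr
  · have hε2 : 0 < ε / 2 := by linarith
    have hp : ∀ j ∈ Finset.range k,
        IntegrableOn (fun ω : ℝ => c j * (ω : ℂ) ^ ((j : ℂ) - γ)) (Ioi (ε / 2)) := by
      intro j hj
      have hj' : (j : ℝ) + 1 ≤ k := by exact_mod_cast Finset.mem_range.1 hj
      exact (integrableOn_Ioi_cpow_of_lt (by simp; linarith) hε2).const_mul _
    have hFi : IntegrableOn (fun ω : ℝ => F ω * (ω : ℂ) ^ (-γ)) (Ioi (ε / 2)) :=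
      Integrable.bdd_mul (c := B) (integrableOn_Ioi_cpow_of_lt (by simp; linarith) hε2)
        hF.aestronglyMeasurable (Eventually.of_forall hB)
    refine IntegrableOn.congr_fun (hFi.sub (integrable_finsetSum _ hp)) (fun ω hω => ?_)
      measurableSet_Ioi
    have hω0 : (ω : ℂ) ≠ 0 := by exact_mod_cast (hε2.trans hω).ne'
    simp only [Pi.sub_apply, sub_div, Finset.sum_div]
    congr 1
    · rw [cpow_neg, div_eq_mul_inv]
    · refine Finset.sum_congr rfl fun j _ => ?_
      rw [cpow_sub _ _ hω0, cpow_natCast, mul_div_assoc]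

/-- Continuity and boundedness of the inverse Fourier integral of an integrable function. -/
lemma fourierIntegral_continuous_bounded {g : ℝ → ℂ} (hg : Integrable g) (c : ℂ) :
    Continuous (fun x : ℝ => c * ∫ ω : ℝ, g ω * exp (I * (ω : ℂ) * (x : ℂ))) ∧
    ∃ M : ℝ, ∀ x : ℝ, ‖c * ∫ ω : ℝ, g ω * exp (I * (ω : ℂ) * (x : ℂ))‖ ≤ M := by
  have hn : ∀ x ω : ℝ, ‖g ω * exp (I * (ω : ℂ) * (x : ℂ))‖ = ‖g ω‖ := by
    intro x ω
    rw [norm_mul, show I * (ω : ℂ) * (x : ℂ) = ((ω * x : ℝ) : ℂ) * I by push_cast; ring,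
      norm_exp_ofReal_mul_I, mul_one]
  constructor
  · refine continuous_const.mul (continuous_of_dominated (bound := fun ω => ‖g ω‖) (fun x => ?_)
      (fun x => Eventually.of_forall fun ω => (hn x ω).le) hg.norm
      (Eventually.of_forall fun ω => by fun_prop))
    exact hg.aestronglyMeasurable.mul (Continuous.aestronglyMeasurable (by fun_prop))
  · refine ⟨‖c‖ * ∫ ω, ‖g ω‖, fun x => ?_⟩
    rw [norm_mul]
    gcongr
    refine (norm_integral_le_integral_norm _).trans_eq ?_
    simp only [hn]

/-- for `Re γ > 0`, `Re γ ∉ ℕ`, `k = ⌊Re γ⌋ ≥ 1` and Schwartz `φ`,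
the function `g_φ` is Lebesgue integrable and `I_{a,b}^{(γ;k)*} φ` is bounded and
continuous on `ℝ`. -/
theorem statement8 (a b γ : ℂ) (ha : a ≠ 0) (hb : b ≠ 0) (hγ : 0 < γ.re)
    (hγ' : ∀ n : ℕ, γ.re ≠ (n : ℝ)) (k : ℕ) (hk : (k : ℤ) = ⌊γ.re⌋) (hk1 : 1 ≤ k)
    (φ : SchwartzMap ℝ ℂ) :
    Integrable (fun ω : ℝ =>
      (FT ⇑φ ω - ∑ j ∈ Finset.range k, iteratedDeriv j (FT ⇑φ) 0 * (ω : ℂ) ^ j /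
        (j.factorial : ℂ)) / hab a b γ (-ω)) ∧
    Continuous (Istar a b γ k ⇑φ) ∧
    ∃ M : ℝ, ∀ x : ℝ, ‖Istar a b γ k ⇑φ x‖ ≤ M := by
  have hkle : (k : ℝ) ≤ γ.re := by
    have := Int.floor_le γ.re
    rw [← hk] at this
    exact_mod_cast this
  have h1 : (k : ℝ) < γ.re := lt_of_le_of_ne hkle (hγ' k).symm
  have h2 : γ.re < k + 1 := by
    have := Int.lt_floor_add_one γ.re
    rw [← hk] at this
    exact_mod_cast this
  have hF : Continuous (FT ⇑φ) := (FT_contDiff φ 0).continuous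
  obtain ⟨B, hB⟩ := FT_bounded φ
  have hO := taylor_remainder_isBigO (FT_contDiff φ k)
  have hg : Integrable (fun ω : ℝ =>
      (FT ⇑φ ω - ∑ j ∈ Finset.range k, iteratedDeriv j (FT ⇑φ) 0 * (ω : ℂ) ^ j /
        (j.factorial : ℂ)) / hab a b γ (-ω)) := by
    have hpos := integrableOn_Ioi_sub_poly_div_cpow hF hB hk1 h1 h2 _ hO
    have hneg := integrableOn_Ioi_sub_poly_div_cpow (F := fun ω => FT ⇑φ (-ω)) (by fun_prop)
      (fun ω => hB (-ω)) hk1 h1 h2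
      (fun j => iteratedDeriv j (FT ⇑φ) 0 / (j.factorial : ℂ) * (-1) ^ j) (by
        have ht : Tendsto (fun ω : ℝ => -ω) (𝓝 0) (𝓝 0) := by
          simpa using (continuous_neg (G := ℝ)).tendsto 0
        refine ((hO.comp_tendsto ht).congr_left fun ω => ?_).trans
          (IsBigO.of_bound 1 (Eventually.of_forall fun ω => by simp))
        simp only [Function.comp, ofReal_neg, mul_assoc, ← mul_pow, neg_one_mul])
    rw [← integrableOn_univ, ← Iic_union_Ioi (a := (0 : ℝ))]
    refine IntegrableOn.union ?_ ?_
    · rw [integrableOn_Iic_iff_integrableOn_Iio]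
      have hneg' := IntegrableOn.comp_neg_Iio (c := (0 : ℝ)) (by simpa using hneg)
      refine IntegrableOn.congr_fun (hneg'.const_mul a⁻¹) (fun ω hω => ?_) measurableSet_Iio
      have hω' : 0 < -ω := by simpa using hω
      simp only [hab, if_pos hω', neg_neg, ofReal_neg, mul_assoc, ← mul_pow, neg_one_mul]
      rw [mul_comm a, ← div_div, div_eq_mul_inv _ a, mul_comm _ a⁻¹]
      congr 4
      ext j
      ring
    · refine IntegrableOn.congr_fun (hpos.const_mul b⁻¹) (fun ω hω => ?_) measurableSet_Ioi
      have hω0 : 0 < ω := hω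
      have hω1 : ¬ 0 < -ω := by linarith
      have hω2 : -ω < 0 := by linarith
      simp only [hab, if_neg hω1, if_pos hω2, neg_neg]
      rw [mul_comm b, ← div_div, div_eq_mul_inv _ b, mul_comm _ b⁻¹]
      congr 4
      ext j
      ring
  exact ⟨hg, fourierIntegral_continuous_bounded hg _⟩
end
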